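/- arXiv:2408.01992 — 2 statements merged into one kernel-verified Lean document; each statement's English description precedes it below -/
import Mathlib

section
/- Let (M, ρ) be a nonempty compact metric space and f : M → M a homeomorphism. If the chain recurrent set R_f of f is finite, then every point of R_f is a periodic point of f: for each x ∈ R_f there exists an integer m ≥ 1 with f^m(x) = x. -/
open Filter Topology

/-- An `ε`-chain of the map `f` from `x` to `y`: a finite sequence of points
`x = x₀, x₁, …, x_k = y` together with integers `m₁, …, m_k ≥ 1` such that
`dist (f^{m_i}(x_{i-1}), x_i) < ε` for every `1 ≤ i ≤ k`. -/
def IsEpsChain {M : Type*} [PseudoMetricSpace M] (f : M → M) (ε : ℝ) (x y : M) : Prop :=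
  ∃ k : ℕ, 0 < k ∧ ∃ (c : Fin (k + 1) → M) (m : Fin k → ℕ),
    c 0 = x ∧ c (Fin.last k) = y ∧ (∀ i, 1 ≤ m i) ∧
    ∀ i : Fin k, dist (f^[m i] (c i.castSucc)) (c i.succ) < ε

/-- A point is chain recurrent for `f` if for every `ε > 0` there is an `ε`-chain
from the point to itself. -/
def ChainRecurrent {M : Type*} [PseudoMetricSpace M] (f : M → M) (x : M) : Prop :=
  ∀ ε : ℝ, 0 < ε → IsEpsChain f ε x x

/-- The chain recurrent set of `f`. -/
def chainRecurrentSet {M : Type*} [PseudoMetricSpace M] (f : M → M) : Set M :=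
  {x | ChainRecurrent f x}

section

open Function Set

theorem subset_periodicPts_of_finite {α : Type*} {f : α → α} {s : Set α} (hs : s.Finite)
    (hmaps : MapsTo f s s) (hinj : InjOn f s) : s ⊆ periodicPts f := by
  intro x hx
  have : Finite s := hs
  have hperiodic : (⟨x, hx⟩ : s) ∈ periodicPts (hmaps.restrict f s s) :=
    (hmaps.restrict_inj.mpr hinj).mem_periodicPts _
  have hsemiconj : Semiconj ((↑) : s → α) (hmaps.restrict f s s) f := fun _ ↦ rfl
  exact hsemiconj.mapsTo_periodicPts hperiodic

variable {M N : Type*} [PseudoMetricSpace M] [PseudoMetricSpace N]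
  {f : M → M} {g : N → N} {φ : M → N}

theorem IsEpsChain.map_of_semiconj {δ ε : ℝ} {x y : M} (hchain : IsEpsChain f δ x y)
    (hsemiconj : Semiconj φ f g) (hφ : ∀ ⦃a b⦄, dist a b < δ → dist (φ a) (φ b) < ε) :
    IsEpsChain g ε (φ x) (φ y) := by
  obtain ⟨k, hk, c, m, rfl, rfl, hm, hdist⟩ := hchain
  refine ⟨k, hk, φ ∘ c, m, rfl, rfl, hm, fun i ↦ ?_⟩
  have hiterate : φ (f^[m i] (c i.castSucc)) = g^[m i] (φ (c i.castSucc)) :=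
    hsemiconj.iterate_right (m i) _
  simpa only [comp_apply, hiterate] using hφ (hdist i)

theorem ChainRecurrent.map_of_semiconj {x : M} (hx : ChainRecurrent f x)
    (hsemiconj : Semiconj φ f g) (hφ : UniformContinuous φ) : ChainRecurrent g (φ x) := by
  intro ε hε
  obtain ⟨δ, hδ, hφδ⟩ := Metric.uniformContinuous_iff.mp hφ ε hε
  exact (hx δ hδ).map_of_semiconj hsemiconj hφδ

theorem mapsTo_chainRecurrentSet (hf : UniformContinuous f) :
    MapsTo f (chainRecurrentSet f) (chainRecurrentSet f) :=
  fun _ hx ↦ ChainRecurrent.map_of_semiconj hx (fun _ ↦ rfl) hf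

theorem chainRecurrentSet_finite_periodic_general (hf : UniformContinuous f)
    (hinj : InjOn f (chainRecurrentSet f)) (hfin : (chainRecurrentSet f).Finite) :
    chainRecurrentSet f ⊆ periodicPts f :=
  subset_periodicPts_of_finite hfin (mapsTo_chainRecurrentSet hf) hinj

end

/-- for a homeomorphism `f` of a nonempty compact metric space,
if the chain recurrent set `R_f` is finite, then every point of `R_f` is periodic:
there is an integer `m ≥ 1` with `f^m(x) = x`. -/
theorem chainRecurrentSet_finite_periodic {M : Type*} [MetricSpace M] [CompactSpace M]
    [Nonempty M] (f : M ≃ₜ M) (hfin : (chainRecurrentSet (⇑f)).Finite) :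
    ∀ x ∈ chainRecurrentSet (⇑f), ∃ m : ℕ, 1 ≤ m ∧ (⇑f)^[m] x = x := by
  exact chainRecurrentSet_finite_periodic_general
    (CompactSpace.uniformContinuous_of_continuous f.continuous) f.injective.injOn hfin
end

section
/- Let M be a closed topological n-manifold, B ⊆ M a compact locally flat n-ball with frontier sphere S = ∂B, and φ : S^{n−1} → S a homeomorphism from the standard unit sphere S^{n−1} = ∂𝔹ⁿ ⊆ ℝⁿ onto S. Then the quotient space of the disjoint union (M ∖ int B) ⊔ 𝔹ⁿ obtained by identifying each x ∈ ∂𝔹ⁿ with φ(x) ∈ M ∖ int B (with the quotient topology) is homeomorphic to M. -/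
open Filter Topology

/-- `M` is a topological `n`-manifold without boundary: every point has an open
neighbourhood homeomorphic to `ℝⁿ`. -/
def IsChartedEuclidean (n : ℕ) (M : Type*) [TopologicalSpace M] : Prop :=
  ∀ x : M, ∃ U : Set M, IsOpen U ∧ x ∈ U ∧ Nonempty (U ≃ₜ EuclideanSpace ℝ (Fin n))

/-- The half space `ℝⁿ₊ = {x ∈ ℝⁿ : xₙ ≥ 0}` (last coordinate nonnegative). -/
def halfSpace (n : ℕ) : Set (EuclideanSpace ℝ (Fin n)) :=
  {y | ∀ j : Fin n, (j : ℕ) = n - 1 → 0 ≤ y j}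

/-- A subset `X ⊆ M` is a locally flat codimension-zero submanifold: every `x ∈ X`
has an open neighbourhood `U` in `M` and a homeomorphism `ψ : U ≃ₜ ℝⁿ` with either
`ψ(U ∩ X) = ℝⁿ` or `ψ(U ∩ X) = ℝⁿ₊`. -/
def IsLocallyFlatCodimZero (n : ℕ) {M : Type*} [TopologicalSpace M] (X : Set M) : Prop :=
  ∀ x ∈ X, ∃ U : Set M, IsOpen U ∧ x ∈ U ∧
    ∃ ψ : U ≃ₜ EuclideanSpace ℝ (Fin n),
      ψ '' {y : U | (y : M) ∈ X} = Set.univ ∨ ψ '' {y : U | (y : M) ∈ X} = halfSpace n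

/-- A compact locally flat `n`-ball in `M`: a compact subset homeomorphic to the closed
unit ball of `ℝⁿ` which is locally flat (of codimension zero) in `M`. -/
def IsCompactLocallyFlatBall (n : ℕ) {M : Type*} [TopologicalSpace M] (B : Set M) : Prop :=
  IsCompact B ∧ Nonempty (B ≃ₜ (Metric.closedBall (0 : EuclideanSpace ℝ (Fin n)) 1)) ∧
    IsLocallyFlatCodimZero n B

open Set Metric Function MeasureTheory
open scoped unitInterval NNReal

/-!
Parametrize `B` by the closed unit ball. If the parametrization matches `frontier B` with the unit
sphere, then comparing it with `φ` gives a self-homeomorphism of the sphere, which extends radially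
to the ball (the Alexander trick). Correcting the parametrization by this extension makes it agree
with `φ` on the sphere, and the inclusion of `M ∖ int B` together with the corrected parametrization
is a closed map onto `M` whose fibres are exactly the glued points.

That `frontier B` corresponds to the sphere is invariance of the boundary: in the locally flat
charts, `B` is a convex set with nonempty interior, and a local homeomorphism between two such sets
preserves interior points. Indeed, contracting a convex set towards an interior point pushes its
boundary inwards at once, whereas a homotopy starting at the identity cannot move all points off the
centre of a Euclidean ball at once, because there is no retraction of the ball onto the sphere. The
latter is Milnor's volume argument: for a `C¹` map `r` fixing the sphere pointwise, the integral of
`det r'` over the ball is the volume of the ball, whereas `det r' = 0` if `r` takes values in the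
sphere.
-/

section LipschitzPerturbation

variable {E F : Type*} [NormedAddCommGroup E] [NormedSpace ℝ E] [NormedAddCommGroup F]

theorem inter_frontier_nonempty_of_isPreconnected {X : Type*} [TopologicalSpace X] {s t : Set X}
    (ht : IsPreconnected t) (hts : (t ∩ s).Nonempty) (hts' : (t ∩ sᶜ).Nonempty) :
    (t ∩ frontier s).Nonempty := by
  by_contra hempty
  have hcover : t ⊆ interior s ∪ interior sᶜ := by
    rwa [← compl_frontier_eq_union_interior, subset_compl_iff_disjoint_right,
      disjoint_iff_inter_eq_empty, ← not_nonempty_iff_eq_empty]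
  obtain ⟨x, hxt, hxs⟩ := hts
  obtain ⟨y, hyt, hys⟩ := hts'
  have hx : x ∈ interior s :=
    (hcover hxt).resolve_right fun h => interior_subset h hxs
  have hdisj : Disjoint (interior s) (interior sᶜ) :=
    disjoint_compl_right.mono interior_subset interior_subset
  exact hys (interior_subset
    (ht.subset_left_of_subset_union isOpen_interior isOpen_interior hdisj hcover ⟨x, hxt, hx⟩ hyt))

theorem lipschitzWith_indicator_of_eqOn_frontier_zero {C : ℝ≥0} {u : E → F} {K : Set E}
    (hK : IsClosed K) (hu : LipschitzOnWith C u K) (hu0 : EqOn u 0 (frontier K)) :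
    LipschitzWith C (K.indicator u) := by
  -- The segment from a point of `K` to a point outside meets `frontier K`, where `u` vanishes.
  have hcross : ∀ x ∈ K, ∀ y ∉ K, dist (u x) 0 ≤ C * dist x y := by
    intro x hx y hy
    obtain ⟨z, hz, hzK⟩ := inter_frontier_nonempty_of_isPreconnected
      (convex_segment x y).isPreconnected ⟨x, left_mem_segment ℝ x y, hx⟩
      ⟨y, right_mem_segment ℝ x y, hy⟩
    calc dist (u x) 0 = dist (u x) (u z) := by rw [hu0 hzK, Pi.zero_apply]
      _ ≤ C * dist x z := hu.dist_le_mul x hx z (hK.frontier_subset hzK)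
      _ ≤ C * dist x y := by
        gcongr
        linarith [dist_add_dist_of_mem_segment hz, dist_nonneg (x := z) (y := y)]
  refine LipschitzWith.of_dist_le_mul fun x y => ?_
  by_cases hx : x ∈ K <;> by_cases hy : y ∈ K <;> simp only [hx, hy, indicator_of_mem,
    indicator_of_notMem, not_false_eq_true]
  · exact hu.dist_le_mul x hx y hy
  · exact hcross x hx y hy
  · rw [dist_comm, dist_comm x]
    exact hcross y hy x hx
  · rw [dist_self]
    positivity

theorem bijective_id_add_of_lipschitzWith [CompleteSpace E] {c : ℝ≥0} (hc : c < 1) {w : E → E}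
    (hw : LipschitzWith c w) : Bijective fun x => x + w x := by
  have happrox : ApproximatesLinearOn (fun x => x + w x)
      (ContinuousLinearEquiv.refl ℝ E : E →L[ℝ] E) univ c := by
    intro x _ y _
    simpa [add_sub_add_comm] using hw.norm_sub_le x y
  have hc' : Subsingleton E ∨
      c < ‖((ContinuousLinearEquiv.refl ℝ E).symm : E →L[ℝ] E)‖₊⁻¹ := by
    refine (subsingleton_or_nontrivial E).imp_right fun (_ : Nontrivial E) => ?_
    rwa [ContinuousLinearEquiv.refl_symm, ContinuousLinearEquiv.coe_refl,
      ContinuousLinearMap.nnnorm_id, inv_one]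
  exact ⟨injOn_univ.1 (happrox.injOn hc'), happrox.surjective hc'⟩

theorem image_eq_of_bijective_of_eqOn_compl_id {X : Type*} {g : X → X} (hg : Bijective g)
    {s : Set X} (hs : EqOn g id sᶜ) : g '' s = s := by
  rw [← compl_inj_iff, ← image_compl_eq hg, hs.image_eq, image_id]

theorem bijOn_id_add_of_lipschitzOnWith [CompleteSpace E] {c : ℝ≥0} (hc : c < 1) {u : E → E}
    {K : Set E} (hK : IsClosed K) (hu : LipschitzOnWith c u K) (hu0 : EqOn u 0 (frontier K)) :
    BijOn (fun x => x + u x) (interior K) (interior K) := by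
  have hbij := bijective_id_add_of_lipschitzWith hc
    (lipschitzWith_indicator_of_eqOn_frontier_zero hK hu hu0)
  have hoff : EqOn (fun x => x + K.indicator u x) id (interior K)ᶜ := by
    intro x hx
    by_cases hxK : x ∈ K
    · have hxf : x ∈ frontier K := hK.frontier_eq ▸ ⟨hxK, hx⟩
      simp [hxK, hu0 hxf]
    · simp [hxK]
  have himage := image_eq_of_bijective_of_eqOn_compl_id hbij hoff
  have hcongr : EqOn (fun x => x + K.indicator u x) (fun x => x + u x) (interior K) := by
    intro x hx
    simp [interior_subset hx]
  exact BijOn.congr ⟨mapsTo_iff_image_subset.2 himage.subset, hbij.1.injOn, himage.superset⟩ hcongr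

end LipschitzPerturbation

section Determinant

variable {E : Type*} [NormedAddCommGroup E] [NormedSpace ℝ E] [FiniteDimensional ℝ E]

theorem det_one_add_pos_of_norm_lt_one {A : E →L[ℝ] E} (hA : ‖A‖ < 1) :
    0 < (1 + A : E →L[ℝ] E).det := by
  have := FiniteDimensional.complete ℝ E
  have hne : ∀ L ∈ ball (0 : E →L[ℝ] E) 1, (1 + L : E →L[ℝ] E).det ≠ 0 := by
    intro L hL
    have hunit : IsUnit (1 + L) := by
      simpa using isUnit_one_sub_of_norm_lt_one (x := -L) (by simpa using hL)
    exact (LinearMap.isUnit_det _ (hunit.map ContinuousLinearMap.toLinearMapRingHom)).ne_zero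
  have hcont : Continuous fun L : E →L[ℝ] E => (1 + L).det :=
    ContinuousLinearMap.continuous_det.comp (continuous_const.add continuous_id)
  by_contra! hneg
  have hone : (0 : ℝ) ≤ (1 + (0 : E →L[ℝ] E)).det := by simp [ContinuousLinearMap.det]
  obtain ⟨L, hL, hL0⟩ := (convex_ball (0 : E →L[ℝ] E) 1).isPreconnected.intermediate_value
    (mem_ball_zero_iff.2 hA) (mem_ball_self one_pos) hcont.continuousOn ⟨hneg, hone⟩
  exact hne L hL hL0

theorem exists_polynomial_eval_eq_det_one_add_smul {R V : Type*} [CommRing R] [AddCommGroup V]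
    [Module R V] [Module.Free R V] [Module.Finite R V] [StrongRankCondition R]
    (A : V →ₗ[R] V) :
    ∃ p : Polynomial R, p.natDegree ≤ Module.finrank R V ∧
      ∀ t : R, LinearMap.det (1 + t • A) = p.eval t := by
  let b := Module.finBasis R V
  let m := LinearMap.toMatrix b b A
  refine ⟨((Polynomial.X : Polynomial R) • m.map Polynomial.C +
    (1 : Matrix _ _ R).map Polynomial.C).det, ?_, fun t => ?_⟩
  · simpa using Polynomial.natDegree_det_X_add_C_le m 1
  · have hmap : (Polynomial.evalRingHom t).mapMatrix ((Polynomial.X : Polynomial R) •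
        m.map Polynomial.C + (1 : Matrix _ _ R).map Polynomial.C) = t • m + 1 := by
      ext i j
      simp only [Matrix.one_apply, RingHom.mapMatrix_apply, Matrix.map_apply, Matrix.add_apply,
        Matrix.smul_apply, smul_eq_mul, Polynomial.coe_evalRingHom, Polynomial.eval_add,
        Polynomial.eval_mul, Polynomial.eval_X, Polynomial.eval_C]
    rw [← Polynomial.coe_evalRingHom, RingHom.map_det, hmap, ← LinearMap.det_toMatrix b, map_add,
      map_smul, LinearMap.toMatrix_one, add_comm]

theorem exists_polynomial_eval_eq_integral {α : Type*} [MeasurableSpace α] {μ : Measure α}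
    {f : ℝ → α → ℝ} {d : ℕ} (hint : ∀ t, Integrable (f t) μ)
    (hpoly : ∀ x, ∃ p : Polynomial ℝ, p.natDegree ≤ d ∧ ∀ t, f t x = p.eval t) :
    ∃ P : Polynomial ℝ, ∀ t, ∫ x, f t x ∂μ = P.eval t := by
  have hinj : InjOn (Nat.cast : ℕ → ℝ) (Finset.range (d + 1)) := Nat.cast_injective.injOn
  have hinterp : ∀ t x, f t x = ∑ i ∈ Finset.range (d + 1),
      f i x * (Lagrange.basis (Finset.range (d + 1)) (Nat.cast : ℕ → ℝ) i).eval t := by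
    intro t x
    obtain ⟨p, hpd, hp⟩ := hpoly x
    have hdeg : p.degree < (Finset.range (d + 1)).card := by
      rw [Finset.card_range]
      exact Polynomial.degree_le_natDegree.trans_lt (by exact_mod_cast Nat.lt_succ_of_le hpd)
    rw [hp t, Lagrange.eq_interpolate hinj hdeg]
    simp [Polynomial.eval_finsetSum, hp]
  refine ⟨Lagrange.interpolate (Finset.range (d + 1)) Nat.cast fun i => ∫ x, f i x ∂μ, fun t => ?_⟩
  simp_rw [hinterp t]
  rw [integral_finsetSum (Finset.range (d + 1)) fun (i : ℕ) _ => (hint (i : ℝ)).mul_const _]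
  simp [Polynomial.eval_finsetSum, integral_mul_const]

end Determinant

section VolumePreservation

variable {E : Type*} [NormedAddCommGroup E] [NormedSpace ℝ E] [FiniteDimensional ℝ E]
  [MeasurableSpace E] [BorelSpace E] (μ : Measure E) [μ.IsAddHaarMeasure]

theorem integral_det_one_add_fderiv_of_lipschitzOnWith {c : ℝ≥0} (hc : c < 1) {u : E → E}
    {K : Set E} (hK : IsClosed K) (hu : LipschitzOnWith c u K) (hu0 : EqOn u 0 (frontier K))
    (hdiff : DifferentiableOn ℝ u (interior K)) :
    ∫ x in interior K, (1 + fderiv ℝ u x).det ∂μ = μ.real (interior K) := by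
  have := FiniteDimensional.complete ℝ E
  have hbij := bijOn_id_add_of_lipschitzOnWith hc hK hu hu0
  have hderiv : ∀ x ∈ interior K,
      HasFDerivWithinAt (fun x => x + u x) (1 + fderiv ℝ u x) (interior K) x := fun x hx =>
    (hasFDerivWithinAt_id x _).add
      (hdiff.differentiableAt (isOpen_interior.mem_nhds hx)).hasFDerivAt.hasFDerivWithinAt
  have hdet : ∀ x ∈ interior K, 0 < (1 + fderiv ℝ u x).det := fun x hx =>
    det_one_add_pos_of_norm_lt_one <|
      (norm_fderiv_le_of_lipschitzOn ℝ (mem_interior_iff_mem_nhds.1 hx) hu).trans_lt hc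
  calc ∫ x in interior K, (1 + fderiv ℝ u x).det ∂μ
      = ∫ x in interior K, |(1 + fderiv ℝ u x).det| • (1 : ℝ) ∂μ :=
        setIntegral_congr_fun isOpen_interior.measurableSet fun x hx => by
          simp only [abs_of_pos (hdet x hx), smul_eq_mul, mul_one]
    _ = ∫ _ in (fun x => x + u x) '' interior K, (1 : ℝ) ∂μ :=
        (integral_image_eq_integral_abs_det_fderiv_smul μ isOpen_interior.measurableSet hderiv
          hbij.injOn fun _ => 1).symm
    _ = μ.real (interior K) := by simp [hbij.image_eq]

theorem integral_det_one_add_smul_fderiv_of_lipschitzOnWith {C : ℝ≥0} {t : ℝ} (ht : ‖t‖₊ * C < 1)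
    {u : E → E} {K : Set E} (hK : IsClosed K) (hu : LipschitzOnWith C u K)
    (hu0 : EqOn u 0 (frontier K)) (hdiff : DifferentiableOn ℝ u (interior K)) :
    ∫ x in interior K, (1 + t • fderiv ℝ u x).det ∂μ = μ.real (interior K) := by
  have htu : LipschitzOnWith (‖t‖₊ * C) (t • u) K :=
    (lipschitzWith_smul t).comp_lipschitzOnWith hu
  have htu0 : EqOn (t • u) 0 (frontier K) := fun x hx => by simp [hu0 hx]
  simpa only [fderiv_const_smul_field, Pi.smul_apply] using
    integral_det_one_add_fderiv_of_lipschitzOnWith μ ht hK htu htu0 (hdiff.const_smul t)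

-- With `r = id + u`, the integral of `det (1 + t u')` is a polynomial in `t`. It is constant for
-- small `t`, as `id + t u` then permutes `interior K`, and hence also at `t = 1`.
theorem integral_det_fderiv_of_eqOn_frontier_id {K : Set E} (hK : IsCompact K) {r : E → E}
    (hr : ContDiff ℝ 1 r) (hrid : EqOn r id (frontier K)) :
    ∫ x in interior K, (fderiv ℝ r x).det ∂μ = μ.real (interior K) := by
  let u : E → E := r - id
  have hu : ContDiff ℝ 1 u := hr.sub contDiff_id
  have hu0 : EqOn u 0 (frontier K) := fun x hx => sub_eq_zero.2 (hrid hx)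
  have hint (t : ℝ) : IntegrableOn (fun x => (1 + t • fderiv ℝ u x).det) (interior K) μ := by
    have hcont : Continuous fun x => (1 + t • fderiv ℝ u x).det :=
      ContinuousLinearMap.continuous_det.comp
        (continuous_const.add ((hu.continuous_fderiv one_ne_zero).const_smul t))
    exact (hcont.continuousOn.integrableOn_compact hK).mono_set interior_subset
  obtain ⟨P, hP⟩ := exists_polynomial_eval_eq_integral hint fun x =>
    exists_polynomial_eval_eq_det_one_add_smul (fderiv ℝ u x : E →ₗ[ℝ] E)
  obtain ⟨C, hC⟩ := hu.locallyLipschitz.locallyLipschitzOn.exists_lipschitzOnWith_of_compact hK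
  have hsmall : ∀ᶠ t : ℝ in 𝓝 0, P.eval t = μ.real (interior K) := by
    have hlt : ∀ᶠ t : ℝ in 𝓝 0, ‖t‖₊ * C < 1 :=
      (continuous_nnnorm.mul continuous_const).continuousAt.eventually_lt_const (by simp)
    filter_upwards [hlt] with t ht
    rw [← hP t]
    exact integral_det_one_add_smul_fderiv_of_lipschitzOnWith μ ht hK.isClosed hC hu0
      (hu.differentiable one_ne_zero).differentiableOn
  have hPconst : P = Polynomial.C (μ.real (interior K)) :=
    Polynomial.eq_of_infinite_eval_eq _ _ <|
      (infinite_of_mem_nhds 0 hsmall).mono fun t ht => by simpa using ht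
  have hfderiv (x : E) : fderiv ℝ r x = 1 + (1 : ℝ) • fderiv ℝ u x := by
    rw [fderiv_sub (hr.differentiable one_ne_zero x) differentiableAt_id, fderiv_id, one_smul]
    exact (add_sub_cancel _ _).symm
  simp_rw [hfderiv]
  rw [hP 1, hPconst, Polynomial.eval_C]

end VolumePreservation

section SphereRetraction

variable {E : Type*} [NormedAddCommGroup E] [InnerProductSpace ℝ E] [FiniteDimensional ℝ E]

theorem det_fderiv_eq_zero_of_dist_eq {r : E → E} (hr : Differentiable ℝ r) {c : E} {ρ : ℝ}
    (hρ : ρ ≠ 0) (hrc : ∀ x, dist (r x) c = ρ) (x : E) : (fderiv ℝ r x).det = 0 := by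
  by_contra hdet
  have horth : ∀ v, inner ℝ (r x - c) (fderiv ℝ r x v) = 0 := by
    intro v
    have hderiv : HasFDerivAt (fun y => ‖r y - c‖ ^ 2)
        (2 • (innerSL ℝ (r x - c)).comp (fderiv ℝ r x)) x :=
      ((hr x).hasFDerivAt.sub_const c).norm_sq
    have hconst : (fun y => ‖r y - c‖ ^ 2) = fun _ => ρ ^ 2 := by
      ext y
      rw [← dist_eq_norm, hrc y]
    rw [hconst] at hderiv
    simpa [-map_sub] using DFunLike.congr_fun (hderiv.unique (hasFDerivAt_const (ρ ^ 2) x)) v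
  have hsurj : Surjective (fderiv ℝ r x) :=
    (LinearMap.equivOfDetNeZero (fderiv ℝ r x : E →ₗ[ℝ] E) hdet).surjective
  obtain ⟨v, hv⟩ := hsurj (r x - c)
  have hzero : r x - c = 0 := by simpa [hv] using horth v
  exact hρ (by rw [← hrc x, dist_eq_norm, hzero, norm_zero])

theorem not_eqOn_sphere_id_of_contDiff_of_dist_eq {r : E → E} (hr : ContDiff ℝ 1 r) {c : E} {ρ : ℝ}
    (hρ : 0 < ρ) (hrc : ∀ x, dist (r x) c = ρ) : ¬ EqOn r id (sphere c ρ) := by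
  intro hrid
  let _ : MeasurableSpace E := borel E
  have : BorelSpace E := ⟨rfl⟩
  have hvol := integral_det_fderiv_of_eqOn_frontier_id volume (isCompact_closedBall c ρ) hr
    (by rwa [frontier_closedBall c hρ.ne'])
  simp_rw [det_fderiv_eq_zero_of_dist_eq (hr.differentiable one_ne_zero) hρ.ne' hrc] at hvol
  rw [integral_zero, interior_closedBall c hρ.ne'] at hvol
  exact (measure_ball_pos volume c hρ).ne'
    ((measureReal_eq_zero_iff measure_ball_lt_top.ne).1 hvol.symm)

theorem exists_eq_of_contDiff_of_eqOn_sphere_id {G : E → E} (hG : ContDiff ℝ 1 G) {c : E}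
    {ρ : ℝ} (hρ : 0 < ρ) (hGid : EqOn G id (sphere c ρ)) : ∃ y, G y = c := by
  by_contra! hne
  refine not_eqOn_sphere_id_of_contDiff_of_dist_eq
    (r := fun x => c + (ρ * ‖G x - c‖⁻¹) • (G x - c)) ?_ (c := c) hρ ?_ ?_
  · have hsub : ContDiff ℝ 1 fun x => G x - c := hG.sub contDiff_const
    exact contDiff_const.add ((contDiff_const.mul
      ((hsub.norm ℝ fun x => sub_ne_zero.2 (hne x)).inv fun x =>
        norm_ne_zero_iff.2 (sub_ne_zero.2 (hne x)))).smul hsub)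
  · intro x
    have hx : ‖G x - c‖ ≠ 0 := norm_ne_zero_iff.2 (sub_ne_zero.2 (hne x))
    rw [dist_self_add_left, norm_smul, norm_mul, norm_inv, norm_norm, mul_assoc,
      inv_mul_cancel₀ hx, mul_one, Real.norm_of_nonneg hρ.le]
  · intro x hx
    have hnorm : ‖x - c‖ = ρ := mem_sphere_iff_norm.1 hx
    simp [hGid hx, hnorm, hρ.ne']

theorem exists_eq_of_continuousOn_of_eqOn_sphere_id {F : E → E} {c : E} {ρ : ℝ} (hρ : 0 < ρ)
    (hF : ContinuousOn F (closedBall c ρ)) (hFid : EqOn F id (sphere c ρ)) :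
    ∃ y ∈ closedBall c ρ, F y = c := by
  by_contra! hne
  let f : E → E := (closedBall c ρ).indicator (F - id)
  have hf : Continuous f := by
    refine continuous_indicator (fun x hx => sub_eq_zero.2 (hFid ?_)) ?_
    · rwa [frontier_closedBall c hρ.ne'] at hx
    · rw [isClosed_closedBall.closure_eq]
      exact hF.sub continuousOn_id
  have hfc : ∀ x, 0 < dist (x + f x) c := by
    intro x
    rw [dist_pos]
    by_cases hx : x ∈ closedBall c ρ
    · simpa [f, hx] using hne x hx
    · have hxc : x ≠ c := fun h => hx (h ▸ mem_closedBall_self hρ.le)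
      simpa [f, hx] using hxc
  obtain ⟨g, hg, hgf, hsupp⟩ := hf.exists_contDiff_approx 1
    ((continuous_id.add hf).dist continuous_const) hfc
  have hgid : EqOn (fun x => x + g x) id (sphere c ρ) := by
    intro x hx
    have hfx : f x = 0 := by simp [f, hFid hx]
    have hgx : g x = 0 := notMem_support.1 fun h => hsupp h hfx
    simp [hgx]
  obtain ⟨y, hy⟩ := exists_eq_of_contDiff_of_eqOn_sphere_id (contDiff_id.add hg) hρ hgid
  have hlt : dist (g y) (f y) < dist (y + f y) (y + g y) := (hgf y).trans_eq (by rw [← hy]; rfl)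
  rw [dist_add_left, dist_comm] at hlt
  exact hlt.false

end SphereRetraction

section ConvexBody

variable {E : Type*} [NormedAddCommGroup E] [InnerProductSpace ℝ E] [FiniteDimensional ℝ E]

-- Read in the chart, the homotopy run for time `ρ - dist y x` fixes a small sphere around `x`, so
-- it does not avoid `x`.
theorem exists_pos_homotopy_apply_eq {X : Type*} [TopologicalSpace X]
    (e : OpenPartialHomeomorph E X) {x : E} (hx : x ∈ e.source)
    {H : I × X → X} (hH : Continuous H) (hH0 : ∀ k, H (0, k) = k) :
    ∃ s, 0 < s ∧ ∃ k, H (s, k) = e x := by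
  have hnhds : ∀ᶠ q : E × I in 𝓝 (x, 0), q.1 ∈ e.source ∧ H (q.2, e q.1) ∈ e.target := by
    have hsource : ∀ᶠ q : E × I in 𝓝 (x, 0), q.1 ∈ e.source :=
      continuous_fst.continuousAt (e.open_source.mem_nhds hx)
    have hcont : ContinuousAt (fun q : E × I => H (q.2, e q.1)) (x, 0) :=
      hH.continuousAt.comp (continuousAt_snd.prodMk ((e.continuousAt hx).comp continuousAt_fst))
    exact hsource.and (hcont (by simpa [hH0] using e.open_target.mem_nhds (e.map_source hx)))
  obtain ⟨ρ, hρ, hball⟩ := nhds_basis_closedBall.eventually_iff.1 hnhds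
  let τ : E → I := fun y => projIcc 0 1 zero_le_one (ρ - dist y x)
  have hτ : Continuous τ :=
    continuous_projIcc.comp (continuous_const.sub (continuous_id.dist continuous_const))
  have hdomain : ∀ y ∈ closedBall x ρ, y ∈ e.source ∧ H (τ y, e y) ∈ e.target := by
    intro y hy
    have hτy : (τ y : ℝ) ≤ ρ := by
      rw [coe_projIcc]
      exact max_le hρ.le ((min_le_right _ _).trans (sub_le_self ρ dist_nonneg))
    have hdist : dist (τ y) 0 ≤ ρ := by
      rwa [Subtype.dist_eq, Icc.coe_zero, dist_zero_right, Real.norm_of_nonneg (τ y).2.1]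
    exact @hball (y, τ y) (mem_closedBall.2 (Prod.dist_eq.trans_le (max_le hy hdist)))
  have hF : ContinuousOn (fun y => e.symm (H (τ y, e y))) (closedBall x ρ) :=
    e.continuousOn_symm.comp
      (hH.comp_continuousOn (hτ.continuousOn.prodMk
        (e.continuousOn.mono fun y hy => (hdomain y hy).1)))
      fun y hy => (hdomain y hy).2
  have hFid : EqOn (fun y => e.symm (H (τ y, e y))) id (sphere x ρ) := by
    intro y hy
    have hτy : τ y = 0 := by simp [τ, mem_sphere.1 hy]
    simp [hτy, hH0, e.left_inv (hdomain y (sphere_subset_closedBall hy)).1]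
  obtain ⟨y, hy, hyx⟩ := exists_eq_of_continuousOn_of_eqOn_sphere_id hρ hF hFid
  obtain ⟨hysource, hytarget⟩ := hdomain y hy
  have hHy : H (τ y, e y) = e x := by rw [← hyx, e.right_inv hytarget]
  refine ⟨τ y, unitInterval.pos_iff_ne_zero.2 fun hzero => ?_, e y, hHy⟩
  have hyeq : y = x := e.injOn hysource hx (by rwa [hzero, hH0] at hHy)
  have hle : ρ ≤ 0 := by simpa [τ, hyeq, projIcc_eq_zero] using hzero
  exact hρ.not_ge hle

/-- The homotopy that contracts a convex set `K` linearly onto its point `p`. -/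
def convexContraction {V : Type*} [AddCommGroup V] [Module ℝ V] {K : Set V} (hK : Convex ℝ K)
    (p : K) (q : I × K) : K :=
  ⟨AffineMap.lineMap (q.2 : V) (p : V) (q.1 : ℝ), hK.lineMap_mem q.2.2 p.2 q.1.2⟩

variable {V : Type*} [AddCommGroup V] [Module ℝ V] [TopologicalSpace V] [IsTopologicalAddGroup V]
  [ContinuousSMul ℝ V]

theorem continuous_convexContraction {K : Set V} (hK : Convex ℝ K) (p : K) :
    Continuous (convexContraction hK p) := by
  refine Continuous.subtype_mk ?_ _
  simp only [AffineMap.lineMap_apply_module]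
  fun_prop

theorem openPartialHomeomorph_apply_mem_interior {K : Set V} (hK : Convex ℝ K)
    (hKint : (interior K).Nonempty) (e : OpenPartialHomeomorph E K) {x : E} (hx : x ∈ e.source) :
    (e x : V) ∈ interior K := by
  obtain ⟨p, hp⟩ := hKint
  obtain ⟨s, hs, k, hk⟩ := exists_pos_homotopy_apply_eq e hx
    (continuous_convexContraction hK ⟨p, interior_subset hp⟩)
    (fun k => Subtype.ext (AffineMap.lineMap_apply_zero _ _))
  rw [← hk]
  have hcombo := hK.combo_self_interior_mem_interior k.2 hp (sub_nonneg.2 s.2.2) hs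
    (sub_add_cancel 1 (s : ℝ))
  rwa [← AffineMap.lineMap_apply_module] at hcombo

theorem openPartialHomeomorph_apply_mem_interior_of_mem {K : Set E} {L : Set V}
    (hL : Convex ℝ L) (hLint : (interior L).Nonempty) (e : OpenPartialHomeomorph K L) {x : K}
    (hx : x ∈ e.source) (hxK : (x : E) ∈ interior K) : (e x : V) ∈ interior L := by
  have : Nonempty (interior K) := ⟨⟨x, hxK⟩⟩
  have hincl : IsOpenEmbedding (inclusion (interior_subset : interior K ⊆ K)) :=
    .inclusion _ (isOpen_interior.preimage continuous_subtype_val)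
  have hval : IsOpenEmbedding ((↑) : interior K → E) := isOpen_interior.isOpenEmbedding_subtypeVal
  have : Nonempty L := ⟨e x⟩
  let e' : OpenPartialHomeomorph E L :=
    ((hincl.toOpenPartialHomeomorph _).trans e).lift_openEmbedding hval
  have hx' : (x : E) ∈ e'.source := ⟨⟨x, hxK⟩, by simpa using hx, rfl⟩
  have hex : e' x = e x := OpenPartialHomeomorph.lift_openEmbedding_apply _ hval (x := ⟨x, hxK⟩)
  exact hex ▸ openPartialHomeomorph_apply_mem_interior hL hLint e' hx'

variable {F : Type*} [NormedAddCommGroup F] [InnerProductSpace ℝ F] [FiniteDimensional ℝ F]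

theorem mem_interior_iff_of_isOpenEmbedding {K : Set E} {L : Set F} (hK : Convex ℝ K)
    (hKint : (interior K).Nonempty) (hL : Convex ℝ L) (hLint : (interior L).Nonempty) {f : K → L}
    (hf : IsOpenEmbedding f) (x : K) : (f x : F) ∈ interior L ↔ (x : E) ∈ interior K := by
  have : Nonempty K := ⟨x⟩
  let e := hf.toOpenPartialHomeomorph f
  have hx : x ∈ e.source := mem_univ x
  refine ⟨fun h => ?_, openPartialHomeomorph_apply_mem_interior_of_mem hL hLint e hx⟩
  have hsymm := openPartialHomeomorph_apply_mem_interior_of_mem hK hKint e.symm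
    (e.map_source hx) h
  rwa [e.left_inv hx] at hsymm

end ConvexBody

section LocallyFlat

variable {n : ℕ}

theorem convex_halfSpace : Convex ℝ (halfSpace n) := by
  intro x hx y hy a b ha hb _ j hj
  simpa using add_nonneg (mul_nonneg ha (hx j hj)) (mul_nonneg hb (hy j hj))

theorem interior_halfSpace_nonempty : (interior (halfSpace n)).Nonempty := by
  let U : Set (EuclideanSpace ℝ (Fin n)) := {y | ∀ j, 0 < y j}
  have hUopen : IsOpen U := by
    simp only [U, ofPred_forall]
    exact isOpen_iInter_of_finite fun j =>
      isOpen_lt continuous_const (EuclideanSpace.proj (𝕜 := ℝ) j).continuous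
  have hU : U ⊆ halfSpace n := fun y hy j _ => (hy j).le
  exact ⟨WithLp.toLp 2 1, interior_maximal hU hUopen fun _ => zero_lt_one⟩

variable {M : Type*} [TopologicalSpace M] {B : Set M}

theorem IsLocallyFlatCodimZero.exists_isOpenEmbedding (hB : IsLocallyFlatCodimZero n B) {x : M}
    (hx : x ∈ B) : ∃ f : EuclideanSpace ℝ (Fin n) → M, IsOpenEmbedding f ∧ x ∈ range f ∧
      Convex ℝ (f ⁻¹' B) ∧ (interior (f ⁻¹' B)).Nonempty := by
  obtain ⟨U, hU, hxU, ψ, hψ⟩ := hB x hx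
  have hpreimage : (fun y => (ψ.symm y : M)) ⁻¹' B = ψ '' {y : U | (y : M) ∈ B} :=
    (ψ.image_eq_preimage_symm {y : U | (y : M) ∈ B}).symm
  refine ⟨fun y => ψ.symm y, hU.isOpenEmbedding_subtypeVal.comp ψ.symm.isOpenEmbedding,
    ⟨ψ ⟨x, hxU⟩, by simp⟩, ?_⟩
  rw [hpreimage]
  rcases hψ with h | h <;> rw [h]
  · simp [convex_univ]
  · exact ⟨convex_halfSpace, interior_halfSpace_nonempty⟩

variable {F : Type*} [NormedAddCommGroup F] [InnerProductSpace ℝ F] [FiniteDimensional ℝ F]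
  {L : Set F}

theorem IsLocallyFlatCodimZero.mem_interior_iff (hB : IsLocallyFlatCodimZero n B)
    (hL : Convex ℝ L) (hLint : (interior L).Nonempty) (h : B ≃ₜ L) (x : B) :
    (h x : F) ∈ interior L ↔ (x : M) ∈ interior B := by
  obtain ⟨f, hf, ⟨y, hy⟩, hconvex, hint⟩ := hB.exists_isOpenEmbedding x.2
  have hyB : y ∈ f ⁻¹' B := mem_preimage.2 (hy.symm ▸ x.2)
  have hemb : IsOpenEmbedding (h ∘ B.restrictPreimage f) :=
    h.isOpenEmbedding.comp (hf.restrictPreimage B)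
  have hyx : B.restrictPreimage f ⟨y, hyB⟩ = x := Subtype.ext hy
  calc (h x : F) ∈ interior L ↔ y ∈ interior (f ⁻¹' B) := by
        simpa [hyx] using mem_interior_iff_of_isOpenEmbedding hconvex hint hL hLint hemb ⟨y, hyB⟩
    _ ↔ (x : M) ∈ interior B := by
        rw [← hf.isOpenMap.preimage_interior_eq_interior_preimage hf.continuous, mem_preimage, hy]

theorem IsLocallyFlatCodimZero.mem_frontier_iff (hB : IsLocallyFlatCodimZero n B)
    (hBclosed : IsClosed B) (hL : Convex ℝ L) (hLclosed : IsClosed L)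
    (hLint : (interior L).Nonempty) (h : B ≃ₜ L) (x : B) :
    (h x : F) ∈ frontier L ↔ (x : M) ∈ frontier B := by
  rw [hLclosed.frontier_eq, hBclosed.frontier_eq, Set.mem_sdiff, Set.mem_sdiff,
    hB.mem_interior_iff hL hLint h]
  simp

end LocallyFlat

section AlexanderTrick

variable {E F G : Type*} [NormedAddCommGroup E] [NormedSpace ℝ E] [NormedAddCommGroup F]
  [NormedSpace ℝ F] [NormedAddCommGroup G] [NormedSpace ℝ G]

/-- The cone (Alexander extension) of a map `f` between unit spheres: it maps `r • y` to `r • f y`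
for `0 ≤ r` and `y` on the unit sphere. -/
noncomputable def radialExtension (f : sphere (0 : E) 1 → sphere (0 : F) 1) (x : E) : F :=
  ‖x‖ • extend Subtype.val (fun y => (f y : F)) 0 (‖x‖⁻¹ • x)

theorem exists_nonneg_smul_sphere_eq {x : E} (hx : x ≠ 0) :
    ∃ r : ℝ, 0 ≤ r ∧ ∃ y : sphere (0 : E) 1, r • (y : E) = x :=
  ⟨‖x‖, norm_nonneg x, ⟨‖x‖⁻¹ • x, by simp [norm_smul, hx]⟩, by simp [smul_smul, hx]⟩

@[simp]
theorem radialExtension_zero (f : sphere (0 : E) 1 → sphere (0 : F) 1) :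
    radialExtension f 0 = 0 := by
  simp [radialExtension]

theorem radialExtension_smul (f : sphere (0 : E) 1 → sphere (0 : F) 1) {r : ℝ} (hr : 0 ≤ r)
    (y : sphere (0 : E) 1) : radialExtension f (r • (y : E)) = r • (f y : F) := by
  rcases hr.eq_or_lt with rfl | hr
  · simp
  · have hnorm : ‖r • (y : E)‖ = r := by simp [norm_smul, abs_of_pos hr]
    rw [radialExtension, hnorm, inv_smul_smul₀ hr.ne', Subtype.val_injective.extend_apply]

theorem radialExtension_coe (f : sphere (0 : E) 1 → sphere (0 : F) 1) (y : sphere (0 : E) 1) :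
    radialExtension f y = f y := by
  simpa using radialExtension_smul f zero_le_one y

theorem norm_radialExtension (f : sphere (0 : E) 1 → sphere (0 : F) 1) (x : E) :
    ‖radialExtension f x‖ = ‖x‖ := by
  rcases eq_or_ne x 0 with rfl | hx
  · simp
  · obtain ⟨r, hr, y, rfl⟩ := exists_nonneg_smul_sphere_eq hx
    simp [radialExtension_smul f hr, norm_smul]

theorem radialExtension_id (x : E) : radialExtension id x = x := by
  rcases eq_or_ne x 0 with rfl | hx
  · simp
  · obtain ⟨r, hr, y, rfl⟩ := exists_nonneg_smul_sphere_eq hx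
    exact radialExtension_smul id hr y

theorem radialExtension_comp (g : sphere (0 : F) 1 → sphere (0 : G) 1)
    (f : sphere (0 : E) 1 → sphere (0 : F) 1) (x : E) :
    radialExtension (g ∘ f) x = radialExtension g (radialExtension f x) := by
  rcases eq_or_ne x 0 with rfl | hx
  · simp
  · obtain ⟨r, hr, y, rfl⟩ := exists_nonneg_smul_sphere_eq hx
    simp_rw [radialExtension_smul _ hr, comp_apply]

theorem continuous_radialExtension {f : sphere (0 : E) 1 → sphere (0 : F) 1} (hf : Continuous f) :
    Continuous (radialExtension f) := by
  rw [continuous_iff_continuousAt]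
  intro x
  rcases eq_or_ne x 0 with rfl | hx
  · rw [ContinuousAt, radialExtension_zero, tendsto_zero_iff_norm_tendsto_zero]
    simpa [norm_radialExtension] using (continuous_norm (E := E)).tendsto 0
  · have hrestrict : ({0}ᶜ : Set E).domRestrict (radialExtension f) = fun y =>
        ((homeomorphUnitSphereProd E y).2 : ℝ) • (f (homeomorphUnitSphereProd E y).1 : F) := by
      funext y
      rw [← radialExtension_smul f (homeomorphUnitSphereProd E y).2.2.le]
      exact congrArg (fun z : ({0}ᶜ : Set E) => radialExtension f z)
        ((homeomorphUnitSphereProd E).symm_apply_apply y).symm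
    have hon : ContinuousOn (radialExtension f) {0}ᶜ := by
      rw [continuousOn_iff_continuous_domRestrict, hrestrict]
      fun_prop
    exact hon.continuousAt (isOpen_compl_singleton.mem_nhds hx)

/-- The Alexander trick: a homeomorphism between unit spheres extends radially to the closed unit
balls. -/
noncomputable def closedBallExtension (α : sphere (0 : E) 1 ≃ₜ sphere (0 : F) 1) :
    closedBall (0 : E) 1 ≃ₜ closedBall (0 : F) 1 :=
  Homeomorph.subtype
    { toFun := radialExtension α
      invFun := radialExtension α.symm
      left_inv := fun x => by rw [← radialExtension_comp, α.symm_comp_self, radialExtension_id]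
      right_inv := fun x => by rw [← radialExtension_comp, α.self_comp_symm, radialExtension_id]
      continuous_toFun := continuous_radialExtension α.continuous
      continuous_invFun := continuous_radialExtension α.symm.continuous }
    fun x => by simp [norm_radialExtension]

end AlexanderTrick

section Gluing

/-- The restriction of a homeomorphism `h` between subsets to smaller subsets that correspond to
each other under `h`. -/
def restrictHomeomorph {X Y : Type*} [TopologicalSpace X] [TopologicalSpace Y] {s s' : Set X}
    {t t' : Set Y} (h : s ≃ₜ t) (hs : s' ⊆ s) (ht : t' ⊆ t)
    (hmem : ∀ x : s, (h x : Y) ∈ t' ↔ (x : X) ∈ s') : s' ≃ₜ t' where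
  toFun x := ⟨h ⟨x, hs x.2⟩, (hmem _).2 x.2⟩
  invFun y := ⟨h.symm ⟨y, ht y.2⟩, (hmem _).1 (by simp)⟩
  left_inv x := by simp
  right_inv y := by simp

theorem isHomeomorph_quotLift {X Y : Type*} [TopologicalSpace X] [TopologicalSpace Y] {p : X → Y}
    (hp : IsQuotientMap p) {r : X → X → Prop} (hr : ∀ a b, r a b → p a = p b)
    (hker : ∀ a b, p a = p b → Quot.mk r a = Quot.mk r b) : IsHomeomorph (Quot.lift p hr) := by
  refine isHomeomorph_iff_isQuotientMap_injective.2 ⟨?_, ?_⟩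
  · exact .of_comp continuous_quot_mk (continuous_quot_lift hr hp.continuous) hp
  · rintro ⟨a⟩ ⟨b⟩ hab
    exact hker a b hab

variable {M : Type*} [TopologicalSpace M] {n : ℕ} {B : Set M}

theorem IsCompactLocallyFlatBall.exists_homeomorph_extending [T2Space M]
    (hB : IsCompactLocallyFlatBall n B)
    (φ : sphere (0 : EuclideanSpace ℝ (Fin n)) 1 ≃ₜ frontier B) :
    ∃ β : closedBall (0 : EuclideanSpace ℝ (Fin n)) 1 ≃ₜ B,
      ∀ x : sphere (0 : EuclideanSpace ℝ (Fin n)) 1,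
        (β ⟨x, sphere_subset_closedBall x.2⟩ : M) = φ x := by
  obtain ⟨hcompact, ⟨h⟩, hflat⟩ := hB
  have hclosed := hcompact.isClosed
  have hint : (interior (closedBall (0 : EuclideanSpace ℝ (Fin n)) 1)).Nonempty :=
    ⟨0, ball_subset_interior_closedBall (mem_ball_self one_pos)⟩
  have hfrontier (x : B) :
      (h x : EuclideanSpace ℝ (Fin n)) ∈ sphere 0 1 ↔ (x : M) ∈ frontier B := by
    rw [← frontier_closedBall 0 one_ne_zero]
    exact hflat.mem_frontier_iff hclosed (convex_closedBall 0 1) isClosed_closedBall hint h x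
  let α : sphere (0 : EuclideanSpace ℝ (Fin n)) 1 ≃ₜ sphere (0 : EuclideanSpace ℝ (Fin n)) 1 :=
    φ.trans (restrictHomeomorph h hclosed.frontier_subset sphere_subset_closedBall hfrontier)
  refine ⟨(closedBallExtension α).trans h.symm, fun x => ?_⟩
  have hα : closedBallExtension α ⟨x, sphere_subset_closedBall x.2⟩ =
      h ⟨φ x, hclosed.frontier_subset (φ x).2⟩ :=
    Subtype.ext (radialExtension_coe α x)
  rw [Homeomorph.trans_apply, hα, h.symm_apply_apply]

variable {D : Type*} [TopologicalSpace D]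

/-- The map `(M ∖ int B) ⊔ D → M` that is the inclusion on the first summand and fills `B` back in
by the parametrization `β` on the second. -/
def gluingMap (β : D ≃ₜ B) : ((interior B)ᶜ : Set M) ⊕ D → M :=
  Sum.elim Subtype.val fun d => β d

theorem isQuotientMap_gluingMap (hB : IsClosed B) (β : D ≃ₜ B) : IsQuotientMap (gluingMap β) := by
  have hclosed : IsClosedMap (gluingMap β) :=
    isOpen_interior.isClosed_compl.isClosedMap_subtype_val.sumElim
      (hB.isClosedMap_subtype_val.comp β.isClosedMap)
  have hcont : Continuous (gluingMap β) :=
    continuous_subtype_val.sumElim (continuous_subtype_val.comp β.continuous)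
  refine hclosed.isQuotientMap hcont fun x => ?_
  by_cases hx : x ∈ interior B
  · exact ⟨Sum.inr (β.symm ⟨x, interior_subset hx⟩), by simp [gluingMap]⟩
  · exact ⟨Sum.inl ⟨x, hx⟩, rfl⟩

theorem nonempty_quot_homeomorph_of_gluing {S : Type*} (hB : IsClosed B) (β : D ≃ₜ B)
    {i : S → D} {φ : S → frontier B} (hφ : Surjective φ) (hβ : ∀ s, (β (i s) : M) = φ s)
    {r : ((interior B)ᶜ : Set M) ⊕ D → ((interior B)ᶜ : Set M) ⊕ D → Prop}
    (hr : ∀ a b, r a b ↔ ∃ s, a = Sum.inr (i s) ∧ b = Sum.inl ⟨φ s, (φ s).2.2⟩) :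
    Nonempty (Quot r ≃ₜ M) := by
  have hglue : ∀ a b, r a b → gluingMap β a = gluingMap β b := by
    intro a b hab
    obtain ⟨s, rfl, rfl⟩ := (hr a b).1 hab
    exact hβ s
  have hoverlap : ∀ (x : ((interior B)ᶜ : Set M)) (d : D), (x : M) = β d →
      Quot.mk r (Sum.inl x) = Quot.mk r (Sum.inr d) := by
    intro x d hxd
    have hx : (x : M) ∈ frontier B := hB.frontier_eq ▸ ⟨hxd ▸ (β d).2, x.2⟩
    obtain ⟨s, hs⟩ := hφ ⟨x, hx⟩
    have hxs : x = ⟨φ s, (φ s).2.2⟩ := Subtype.ext (by simp [hs])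
    have hds : d = i s := β.injective (Subtype.ext (by rw [← hxd, hβ, hs]))
    exact (Quot.sound ((hr _ _).2 ⟨s, congrArg Sum.inr hds, congrArg Sum.inl hxs⟩)).symm
  refine ⟨(isHomeomorph_quotLift (isQuotientMap_gluingMap hB β) hglue ?_).homeomorph⟩
  rintro (a | a) (b | b) hab
  · exact congrArg (Quot.mk r ∘ Sum.inl) (Subtype.ext hab)
  · exact hoverlap a b hab
  · exact (hoverlap b a hab.symm).symm
  · exact congrArg (Quot.mk r ∘ Sum.inr) (β.injective (Subtype.ext hab))

end Gluing

theorem glue_ball_back_general {n : ℕ} {M : Type*} [TopologicalSpace M] [T2Space M]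
    (B : Set M) (hB : IsCompactLocallyFlatBall n B)
    (φ : (Metric.sphere (0 : EuclideanSpace ℝ (Fin n)) 1) ≃ₜ (frontier B)) :
    Nonempty
      (Quot (fun (a b : ((interior B)ᶜ : Set M) ⊕
              (Metric.closedBall (0 : EuclideanSpace ℝ (Fin n)) 1)) =>
          ∃ (x : EuclideanSpace ℝ (Fin n)) (hx : x ∈ Metric.sphere (0 : EuclideanSpace ℝ (Fin n)) 1)
            (hxb : x ∈ Metric.closedBall (0 : EuclideanSpace ℝ (Fin n)) 1)
            (hφ : (φ ⟨x, hx⟩ : M) ∈ ((interior B)ᶜ : Set M)),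
            a = Sum.inr ⟨x, hxb⟩ ∧ b = Sum.inl ⟨(φ ⟨x, hx⟩ : M), hφ⟩)
        ≃ₜ M) := by
  obtain ⟨β, hβ⟩ := hB.exists_homeomorph_extending φ
  refine nonempty_quot_homeomorph_of_gluing hB.1.isClosed β φ.surjective hβ fun a b => ?_
  exact ⟨fun ⟨x, hx, _, _, ha, hb⟩ => ⟨⟨x, hx⟩, ha, hb⟩,
    fun ⟨x, ha, hb⟩ => ⟨x, x.2, sphere_subset_closedBall x.2, (φ x).2.2, ha, hb⟩⟩

/-- gluing back a ball. Let `M` be a closed topological `n`-manifold,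
`B ⊆ M` a compact locally flat `n`-ball with frontier sphere `S = ∂B`, and
`φ : S^{n-1} ≃ₜ S` a homeomorphism from the standard unit sphere of `ℝⁿ` onto `S`.
Then the quotient of `(M ∖ int B) ⊔ 𝔹ⁿ` identifying each `x ∈ ∂𝔹ⁿ` with `φ(x)` is
homeomorphic to `M`. -/
theorem glue_ball_back {n : ℕ} {M : Type*} [MetricSpace M] [CompactSpace M] [Nonempty M]
    (hM : IsChartedEuclidean n M)
    (B : Set M) (hB : IsCompactLocallyFlatBall n B)
    (φ : (Metric.sphere (0 : EuclideanSpace ℝ (Fin n)) 1) ≃ₜ (frontier B)) :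
    Nonempty
      (Quot (fun (a b : ((interior B)ᶜ : Set M) ⊕
              (Metric.closedBall (0 : EuclideanSpace ℝ (Fin n)) 1)) =>
          ∃ (x : EuclideanSpace ℝ (Fin n)) (hx : x ∈ Metric.sphere (0 : EuclideanSpace ℝ (Fin n)) 1)
            (hxb : x ∈ Metric.closedBall (0 : EuclideanSpace ℝ (Fin n)) 1)
            (hφ : (φ ⟨x, hx⟩ : M) ∈ ((interior B)ᶜ : Set M)),
            a = Sum.inr ⟨x, hxb⟩ ∧ b = Sum.inl ⟨(φ ⟨x, hx⟩ : M), hφ⟩)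
        ≃ₜ M) :=
  glue_ball_back_general B hB φ
end
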